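/- Let n ≥ 1, let A₁, A₂, B₁, B₂ be n×n complex matrices, and let δ ≥ 0 with δ < σ_min(B₁) (so B₁ is invertible). If ‖A₁ − A₂‖₂ ≤ δ and ‖B₁ − B₂‖₂ ≤ δ, then B₂ is invertible and ‖B₁⁻¹A₁ − B₂⁻¹A₂‖₂ ≤ δ‖B₁⁻¹‖₂ (1 + (‖A₁‖₂ + δ)/(σ_min(B₁) − δ)). -/

import Mathlib

/-!
With the bound `‖B₁ u‖ ≥ σ_min(B₁) ‖u‖`, the triangle inequality gives
`‖B₂ u‖ ≥ (σ_min(B₁) - δ) ‖u‖`. A square matrix bounded below by `c > 0` is invertible with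
inverse of norm at most `1 / c` (`isUnit_of_bound`, `specNorm_inv_le`), so this applies to both
`B₁` and `B₂`. The estimate then follows from the identity
`B₁⁻¹ A₁ - B₂⁻¹ A₂ = B₁⁻¹ ((A₁ - A₂) + (B₂ - B₁) B₂⁻¹ A₂)` and submultiplicativity.
-/


/-- The spectral norm of a complex matrix: the operator norm induced by the
Euclidean norm on `ℂⁿ`. -/
noncomputable def specNorm {n : ℕ} (M : Matrix (Fin n) (Fin n) ℂ) : ℝ :=
  ‖LinearMap.toContinuousLinearMap (Matrix.toEuclideanLin M)‖

/-- The Euclidean norm of a vector in `ℂⁿ`. -/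
noncomputable def vecNorm {n : ℕ} (v : Fin n → ℂ) : ℝ :=
  Real.sqrt (∑ i, ‖v i‖ ^ 2)

/-- The smallest singular value of a complex matrix:
`σ_min(M) = inf {‖Mu‖ : ‖u‖ = 1}`. -/
noncomputable def sigmaMin {n : ℕ} (M : Matrix (Fin n) (Fin n) ℂ) : ℝ :=
  sInf {r | ∃ v : Fin n → ℂ, vecNorm v = 1 ∧ r = vecNorm (M.mulVec v)}

open scoped Matrix.Norms.L2Operator in
lemma specNorm_eq {n : ℕ} (M : Matrix (Fin n) (Fin n) ℂ) : specNorm M = ‖M‖ := rfl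

lemma vecNorm_eq {n : ℕ} (v : Fin n → ℂ) : vecNorm v = ‖WithLp.toLp 2 v‖ := by
  rw [EuclideanSpace.norm_eq]; rfl

open scoped Matrix.Norms.L2Operator in
lemma vecNorm_mulVec_le {n : ℕ} (M : Matrix (Fin n) (Fin n) ℂ) (v : Fin n → ℂ) :
    vecNorm (M.mulVec v) ≤ specNorm M * vecNorm v := by
  rw [vecNorm_eq, vecNorm_eq, specNorm_eq]
  exact Matrix.l2_opNorm_mulVec M (WithLp.toLp 2 v)

lemma vecNorm_smul {n : ℕ} (c : ℂ) (v : Fin n → ℂ) : vecNorm (c • v) = ‖c‖ * vecNorm v := by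
  rw [vecNorm_eq, vecNorm_eq, WithLp.toLp_smul, norm_smul]

lemma sigmaMin_mul_le {n : ℕ} (M : Matrix (Fin n) (Fin n) ℂ) (v : Fin n → ℂ) :
    sigmaMin M * vecNorm v ≤ vecNorm (M.mulVec v) := by
  have h0 : 0 ≤ vecNorm v := Real.sqrt_nonneg _
  rcases h0.eq_or_lt with h | h
  · rw [← h, mul_zero]; exact Real.sqrt_nonneg _
  · have hc : ‖((vecNorm v : ℂ))⁻¹‖ = (vecNorm v)⁻¹ := by
      rw [norm_inv, Complex.norm_real, Real.norm_of_nonneg h0]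
    have hs : sigmaMin M ≤ (vecNorm v)⁻¹ * vecNorm (M.mulVec v) := by
      apply csInf_le
      · refine ⟨0, ?_⟩
        rintro r ⟨w, -, rfl⟩
        exact Real.sqrt_nonneg _
      · refine ⟨((vecNorm v : ℂ))⁻¹ • v, ?_, ?_⟩
        · rw [vecNorm_smul, hc, inv_mul_cancel₀ h.ne']
        · rw [Matrix.mulVec_smul, vecNorm_smul, hc]
    calc sigmaMin M * vecNorm v ≤ (vecNorm v)⁻¹ * vecNorm (M.mulVec v) * vecNorm v := by gcongr
      _ = vecNorm (M.mulVec v) := by field_simp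

lemma isUnit_of_bound {n : ℕ} (M : Matrix (Fin n) (Fin n) ℂ) {c : ℝ} (hc : 0 < c)
    (h : ∀ v, c * vecNorm v ≤ vecNorm (M.mulVec v)) : IsUnit M := by
  rw [← Matrix.mulVec_injective_iff_isUnit]
  intro v w hvw
  have h1 := h (v - w)
  rw [Matrix.mulVec_sub, show M.mulVec v = M.mulVec w from hvw, sub_self, vecNorm_eq, vecNorm_eq,
    WithLp.toLp_zero, norm_zero] at h1
  have h2 : ‖WithLp.toLp 2 (v - w)‖ = 0 :=
    le_antisymm (by by_contra! h3; nlinarith [mul_pos hc h3]) (norm_nonneg _)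
  rw [norm_eq_zero, WithLp.toLp_eq_zero] at h2
  exact sub_eq_zero.mp h2

lemma specNorm_inv_le {n : ℕ} (M : Matrix (Fin n) (Fin n) ℂ) {c : ℝ} (hc : 0 < c)
    (h : ∀ v, c * vecNorm v ≤ vecNorm (M.mulVec v)) : specNorm M⁻¹ ≤ 1 / c := by
  have hu := (Matrix.isUnit_iff_isUnit_det M).mp (isUnit_of_bound M hc h)
  refine ContinuousLinearMap.opNorm_le_bound _ (by positivity) fun x => ?_
  have h1 := h (M⁻¹.mulVec x.ofLp)
  rw [Matrix.mulVec_mulVec, Matrix.mul_nonsing_inv _ hu, Matrix.one_mulVec, vecNorm_eq,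
    vecNorm_eq] at h1
  change ‖WithLp.toLp 2 (M⁻¹.mulVec x.ofLp)‖ ≤ 1 / c * ‖x‖
  rw [one_div_mul_eq_div, le_div_iff₀' hc]
  exact h1

open scoped Matrix.Norms.L2Operator in
theorem stmt15 {n : ℕ} (hn : 1 ≤ n)
    (A₁ A₂ B₁ B₂ : Matrix (Fin n) (Fin n) ℂ) (δ : ℝ) (hδ0 : 0 ≤ δ)
    (hδ : δ < sigmaMin B₁)
    (hA : specNorm (A₁ - A₂) ≤ δ) (hB : specNorm (B₁ - B₂) ≤ δ) :
    IsUnit B₂ ∧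
    specNorm (B₁⁻¹ * A₁ - B₂⁻¹ * A₂) ≤
      δ * specNorm B₁⁻¹ * (1 + (specNorm A₁ + δ) / (sigmaMin B₁ - δ)) := by
  have hc : 0 < sigmaMin B₁ - δ := sub_pos.mpr hδ
  have hbound : ∀ v, (sigmaMin B₁ - δ) * vecNorm v ≤ vecNorm (B₂.mulVec v) := by
    intro v
    have h1 := sigmaMin_mul_le B₁ v
    have h2 : vecNorm ((B₁ - B₂).mulVec v) ≤ δ * vecNorm v :=
      (vecNorm_mulVec_le _ v).trans (mul_le_mul_of_nonneg_right hB (Real.sqrt_nonneg _))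
    have h3 : vecNorm (B₁.mulVec v) ≤ vecNorm ((B₁ - B₂).mulVec v) + vecNorm (B₂.mulVec v) := by
      rw [Matrix.sub_mulVec]
      simp only [vecNorm_eq, WithLp.toLp_sub]
      simpa [add_comm] using norm_le_norm_sub_add
        (WithLp.toLp 2 (B₁.mulVec v)) (WithLp.toLp 2 (B₂.mulVec v))
    linarith
  have hU2 := isUnit_of_bound B₂ hc hbound
  have hU1 := isUnit_of_bound B₁ (hδ0.trans_lt hδ) (sigmaMin_mul_le B₁)
  have hinv := specNorm_inv_le B₂ hc hbound
  refine ⟨hU2, ?_⟩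
  rw [Matrix.isUnit_iff_isUnit_det] at hU1 hU2
  have hid : B₁⁻¹ * A₁ - B₂⁻¹ * A₂ = B₁⁻¹ * ((A₁ - A₂) + (B₂ - B₁) * (B₂⁻¹ * A₂)) := by
    rw [mul_add, mul_sub, sub_mul, mul_sub, ← mul_assoc B₂, Matrix.mul_nonsing_inv _ hU2, one_mul,
      ← mul_assoc B₁⁻¹ B₁, Matrix.nonsing_inv_mul _ hU1, one_mul]
    abel
  rw [hid]
  simp only [specNorm_eq] at *
  have hA2 : ‖A₂‖ ≤ ‖A₁‖ + δ := by
    have := norm_le_norm_add_norm_sub A₁ A₂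
    linarith
  rw [norm_sub_rev] at hB
  calc ‖B₁⁻¹ * ((A₁ - A₂) + (B₂ - B₁) * (B₂⁻¹ * A₂))‖
      ≤ ‖B₁⁻¹‖ * (‖A₁ - A₂‖ + ‖B₂ - B₁‖ * (‖B₂⁻¹‖ * ‖A₂‖)) := by
        refine (norm_mul_le _ _).trans ?_
        gcongr
        refine (norm_add_le _ _).trans ?_
        gcongr
        refine (norm_mul_le _ _).trans ?_
        gcongr
        exact norm_mul_le _ _
    _ ≤ ‖B₁⁻¹‖ * (δ + δ * (1 / (sigmaMin B₁ - δ) * (‖A₁‖ + δ))) := by gcongr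
    _ = δ * ‖B₁⁻¹‖ * (1 + (‖A₁‖ + δ) / (sigmaMin B₁ - δ)) := by ring
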